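/- arXiv:1902.07758 — 2 statements merged into one kernel-verified Lean document; each statement's English description precedes it below -/
import Mathlib

section
/- Every subgroup of GL₂(F₇) of order 144 = 2⁴·3² acts transitively on the 48 nonzero vectors of the natural module F₇². -/
open Matrix

namespace GL27

abbrev G := GL (Fin 2) (ZMod 7)
abbrev V := Fin 2 → ZMod 7

theorem fact7 : Fact (Nat.Prime 7) := ⟨by norm_num⟩

section

attribute [local instance] fact7

/-- the natural action -/
@[reducible] def act (H : Subgroup G) : MulAction H V where
  smul g v := g.1.1 *ᵥ v
  one_smul v := by
    change (1 : Matrix (Fin 2) (Fin 2) (ZMod 7)) *ᵥ v = v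
    simp
  mul_smul g h v := by
    change (g.1.1 * h.1.1) *ᵥ v = g.1.1 *ᵥ (h.1.1 *ᵥ v)
    rw [Matrix.mulVec_mulVec]

lemma unip (u : G) (v : V) (hv : v ≠ 0) (h : u.1 *ᵥ v = v) (hd : u.1.det = 1) : u ^ 7 = 1 := by
  have h1 : (u.1 - 1).det = 0 := by
    rw [← Matrix.exists_mulVec_eq_zero_iff]
    exact ⟨v, hv, by rw [Matrix.sub_mulVec, h]; simp⟩
  have h2 : (u.1 - 1) ^ 2 = 0 := by
    rw [Matrix.det_fin_two] at h1 hd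
    simp at h1
    ext i j
    fin_cases i <;> fin_cases j <;> simp [pow_two, Matrix.mul_apply, Fin.sum_univ_two] <;> grind
  have h3 : (u.1 - 1) ^ 7 = u.1 ^ 7 - 1 ^ 7 := sub_pow_char_of_commute 7 (Commute.one_right _)
  have h4 : (u.1 - 1) ^ 7 = 0 := by
    have h5 : (u.1 - 1) ^ (2 + 5) = 0 := by rw [pow_add, h2, zero_mul]
    exact h5
  ext1
  rw [Units.val_pow_eq_pow_val]
  rw [h4, one_pow] at h3
  exact (sub_eq_zero.mp h3.symm)

/-- `v, w` as columns span -/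
lemma span2 (r : G) (v w : V) (hv : v ≠ 0) (hw : w ≠ 0) (h1 : r.1 *ᵥ v = v) (h2 : r.1 *ᵥ w = -w) (x : V) :
    ∃ a b : ZMod 7, x = a • v + b • w := by
  have hli : LinearIndependent (ZMod 7) ![v, w] := by
    rw [LinearIndependent.pair_iff]
    intro s t hst
    have h3 := congrArg (fun y => r.1 *ᵥ y) hst
    simp only [Matrix.mulVec_add, Matrix.mulVec_smul, h1, h2, Matrix.mulVec_zero] at h3
    have h4 : (2 * s) • v = 0 := by
      rw [show (2 * s) • v = (s • v + t • w) + (s • v + t • -w) by module, hst, h3, add_zero]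
    have h5 : (2 * t) • w = 0 := by
      rw [show (2 * t) • w = (s • v + t • w) - (s • v + t • -w) by module, hst, h3, sub_zero]
    have h2 : (2 : ZMod 7) ≠ 0 := by decide
    simp [hv, hw, h2] at h4 h5
    exact ⟨h4, h5⟩
  have := hli.span_eq_top_of_card_eq_finrank (by simp)
  have hx : x ∈ Submodule.span (ZMod 7) (Set.range ![v, w]) := by rw [this]; trivial
  simp only [Matrix.range_cons, Matrix.range_empty, Set.union_empty, Set.singleton_union] at hx
  obtain ⟨a, b, h⟩ := Submodule.mem_span_pair.mp hx
  exact ⟨a, b, h.symm⟩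

lemma two_eq (x : V) (h : x = -x) : x = 0 := by
  have : (2 : ZMod 7) • x = 0 := by
    rw [show (2 : ZMod 7) • x = x - -x by module, ← h, sub_self]
  have h2 : (2 : ZMod 7) ≠ 0 := by decide
  simpa [h2] using this

lemma inj0 (s : G) (x : V) (hx : x ≠ 0) : s.1 *ᵥ x ≠ 0 := by
  intro h
  apply hx
  have : s⁻¹.1 *ᵥ (s.1 *ᵥ x) = x := by
    rw [Matrix.mulVec_mulVec, ← Units.val_mul]; simp
  rw [← this, h, Matrix.mulVec_zero]

lemma diag (r : G) (v w : V) (hv : v ≠ 0) (hw : w ≠ 0) (h1 : r.1 *ᵥ v = v) (h2 : r.1 *ᵥ w = -w)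
    (s : G) (hs : s * r = r * s) :
    ∃ a b : (ZMod 7)ˣ, s.1 *ᵥ v = (a : ZMod 7) • v ∧ s.1 *ᵥ w = (b : ZMod 7) • w := by
  have hs' : s.1 * r.1 = r.1 * s.1 := congrArg Units.val hs
  have e1 : r.1 *ᵥ (s.1 *ᵥ v) = s.1 *ᵥ v := by
    rw [Matrix.mulVec_mulVec, ← hs', ← Matrix.mulVec_mulVec, h1]
  have e2 : r.1 *ᵥ (s.1 *ᵥ w) = -(s.1 *ᵥ w) := by
    rw [Matrix.mulVec_mulVec, ← hs', ← Matrix.mulVec_mulVec, h2, Matrix.mulVec_neg]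
  obtain ⟨a, b, hab⟩ := span2 r v w hv hw h1 h2 (s.1 *ᵥ v)
  obtain ⟨c, d, hcd⟩ := span2 r v w hv hw h1 h2 (s.1 *ᵥ w)
  have hb : b • w = 0 := by
    rw [hab] at e1
    simp only [Matrix.mulVec_add, Matrix.mulVec_smul, h1, h2] at e1
    apply two_eq
    have := add_left_cancel e1
    rw [← smul_neg]; exact this.symm
  have hc : c • v = 0 := by
    rw [hcd] at e2
    simp only [Matrix.mulVec_add, Matrix.mulVec_smul, h1, h2] at e2
    apply two_eq
    rw [neg_add, smul_neg] at e2
    exact add_right_cancel e2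
  rw [hb, add_zero] at hab
  rw [hc, zero_add] at hcd
  have ha : a ≠ 0 := by
    rintro rfl
    exact inj0 s v hv (by rw [hab, zero_smul])
  have hd : d ≠ 0 := by
    rintro rfl
    exact inj0 s w hw (by rw [hcd, zero_smul])
  exact ⟨Units.mk0 a ha, Units.mk0 d hd, hab, hcd⟩

lemma ext_basis (r : G) (v w : V) (hv : v ≠ 0) (hw : w ≠ 0) (h1 : r.1 *ᵥ v = v) (h2 : r.1 *ᵥ w = -w)
    (s t : G) (e1 : s.1 *ᵥ v = t.1 *ᵥ v) (e2 : s.1 *ᵥ w = t.1 *ᵥ w) : s = t := by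
  apply Units.ext
  apply Matrix.ext_of_mulVec_single
  intro i
  obtain ⟨a, b, hab⟩ := span2 r v w hv hw h1 h2 (Pi.single i 1)
  rw [hab]
  simp only [Matrix.mulVec_add, Matrix.mulVec_smul, e1, e2]

lemma neg_eig (r : G) (h : r * r = 1) (hr : r ≠ 1) : ∃ w : V, w ≠ 0 ∧ r.1 *ᵥ w = -w := by
  have h' : r.1 * r.1 = 1 := congrArg Units.val h
  by_contra! hc
  apply hr
  apply Units.ext
  apply Matrix.ext_of_mulVec_single
  intro i
  by_contra hne
  refine hc (r.1 *ᵥ Pi.single i 1 - Pi.single i 1) (sub_ne_zero.mpr (by rwa [Units.val_one, Matrix.one_mulVec] at hne)) ?_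
  rw [Matrix.mulVec_sub, Matrix.mulVec_mulVec, h', Matrix.one_mulVec, neg_sub]

lemma pos_eig (r : G) (h : r * r = 1) (hr : r ≠ -1) : ∃ w : V, w ≠ 0 ∧ r.1 *ᵥ w = w := by
  obtain ⟨w, hw, h2⟩ := neg_eig (-r) (by simpa using h) (by
    intro h; apply hr; rw [← h, neg_neg])
  refine ⟨w, hw, ?_⟩
  rw [Units.val_neg, Matrix.neg_mulVec] at h2
  exact neg_injective h2

lemma neg_one_mem (H : Subgroup G) (hH : Nat.card H = 144) : (-1 : G) ∈ H := by
  obtain ⟨P, hP⟩ := Sylow.exists_subgroup_card_pow_prime (G := H) 2 (n := 4) (by rw [hH]; norm_num)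
  have : Fact (Nat.Prime 2) := ⟨Nat.prime_two⟩
  have hpg : IsPGroup 2 P := IsPGroup.of_card hP
  have : Nontrivial P := by
    rw [← Finite.one_lt_card_iff_nontrivial, hP]; norm_num
  have := hpg.center_nontrivial
  have hdvd : 2 ∣ Nat.card (Subgroup.center P) := by
    obtain ⟨n, hn, h⟩ := (hpg.to_subgroup (Subgroup.center P)).nontrivial_iff_card.mp inferInstance
    rw [h]; exact dvd_pow_self 2 (by omega)
  obtain ⟨z, hz⟩ := exists_prime_orderOf_dvd_card' 2 hdvd
  by_contra hneg
  set r : G := z.1.1.1 with hr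
  have hr2 : r * r = 1 := by
    have : z ^ 2 = 1 := orderOf_dvd_iff_pow_eq_one.mp (dvd_of_eq hz)
    have h3 := congrArg (fun y : Subgroup.center P => y.1.1.1) this
    simpa [pow_two] using h3
  have hr1 : r ≠ 1 := by
    intro h
    have : z = 1 := by
      apply Subtype.ext; apply Subtype.ext; apply Subtype.ext; exact h
    rw [this, orderOf_one] at hz
    omega
  have hrn : r ≠ -1 := by
    intro h
    apply hneg
    rw [← h]; exact z.1.1.2
  obtain ⟨w, hw, h2⟩ := neg_eig r hr2 hr1
  obtain ⟨v, hv, h1⟩ := pos_eig r hr2 hrn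
  have hcomm : ∀ p : P, p.1.1 * r = r * p.1.1 := by
    intro p
    have := (Subgroup.mem_center_iff.mp z.2) p
    exact congrArg (fun y : P => y.1.1) this
  choose a b ha hb using fun p : P => diag r v w hv hw h1 h2 p.1.1 (hcomm p)
  let f : P →* (ZMod 7)ˣ × (ZMod 7)ˣ := MonoidHom.mk' (fun p => (a p, b p)) (by
    intro p q
    have e1 := ha (p * q)
    have e2 := hb (p * q)
    have e3 : (p * q).1.1.1 = p.1.1.1 * q.1.1.1 := rfl
    rw [e3, ← Matrix.mulVec_mulVec] at e1 e2
    rw [ha q, Matrix.mulVec_smul, ha p, smul_smul] at e1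
    rw [hb q, Matrix.mulVec_smul, hb p, smul_smul] at e2
    have e1 := smul_left_injective _ hv e1
    have e2 := smul_left_injective _ hw e2
    apply Prod.ext
    · apply Units.ext
      simp only [Prod.fst_mul, Units.val_mul]
      rw [← e1, mul_comm]
    · apply Units.ext
      simp only [Prod.snd_mul, Units.val_mul]
      rw [← e2, mul_comm])
  have hf : Function.Injective f := by
    intro p q hpq
    have e1 : a p = a q := congrArg Prod.fst hpq
    have e2 : b p = b q := congrArg Prod.snd hpq
    apply Subtype.ext; apply Subtype.ext
    apply ext_basis r v w hv hw h1 h2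
    · rw [ha, ha, e1]
    · rw [hb, hb, e2]
  have := Subgroup.card_dvd_of_injective f hf
  rw [hP, Nat.card_prod, Nat.card_eq_fintype_card, ZMod.card_units] at this
  norm_num at this

/-- scalar matrices -/
def sc : (ZMod 7)ˣ →* G := Units.map (Matrix.scalar (Fin 2)).toMonoidHom

lemma sc_mulVec (c : (ZMod 7)ˣ) (v : V) : (sc c).1 *ᵥ v = (c : ZMod 7) • v := by
  change (Matrix.scalar (Fin 2) (c : ZMod 7)) *ᵥ v = _
  ext i
  simp [Matrix.mulVec_diagonal]

lemma sc_comm (c : (ZMod 7)ˣ) (g : G) : g * sc c = sc c * g := by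
  apply Units.ext
  change g.1 * Matrix.scalar (Fin 2) (c : ZMod 7) = Matrix.scalar (Fin 2) (c : ZMod 7) * g.1
  exact (Matrix.scalar_commute _ (fun _ => Commute.all _ _) _).eq.symm

lemma cube_mem (H : Subgroup G) (hH : Nat.card H = 144) (c : (ZMod 7)ˣ) (hc : c ^ 3 = 1) :
    sc c ∈ H := by
  obtain ⟨P, hP⟩ := Sylow.exists_subgroup_card_pow_prime (G := H) 3 (n := 2) (by rw [hH]; norm_num)
  have : Fact (Nat.Prime 3) := ⟨Nat.prime_three⟩
  let Q : Subgroup G := P.map H.subtype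
  have hQ : Nat.card Q = 3 ^ 2 := by
    rw [← hP]; exact Subgroup.card_map_of_injective H.subtype_injective
  have hQp : IsPGroup 3 Q := IsPGroup.of_card hQ
  let Z : Subgroup G := Subgroup.zpowers (sc c)
  have : Z.Normal := by
    constructor
    intro n hn g
    obtain ⟨k, rfl⟩ := Subgroup.mem_zpowers_iff.mp hn
    rw [← map_zpow, sc_comm, mul_assoc, mul_inv_cancel, mul_one, map_zpow]
    exact hn
  have hZ : IsPGroup 3 Z := by
    intro x
    refine ⟨1, ?_⟩
    obtain ⟨k, hk⟩ := Subgroup.mem_zpowers_iff.mp x.2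
    apply Subtype.ext
    rw [Subgroup.coe_pow, ← hk, ← map_zpow, ← map_pow, ← zpow_natCast, zpow_comm]
    simp [hc]
  have hs : IsPGroup 3 (Q ⊔ Z : Subgroup G) := hQp.to_sup_of_normal_right hZ
  obtain ⟨n, hn⟩ := IsPGroup.iff_card.mp hs
  have hd : 3 ^ n ∣ 2016 := by
    rw [← hn]
    have := Subgroup.card_subgroup_dvd_card (Q ⊔ Z)
    rw [Matrix.card_GL_field] at this
    simpa [Fin.prod_univ_two] using this
  have hn2 : n ≤ 2 := by
    by_contra hlt
    have : 3 ^ 3 ∣ 2016 := (pow_dvd_pow 3 (by omega)).trans hd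
    norm_num at this
  have heq : Q = Q ⊔ Z := by
    apply Subgroup.eq_of_le_of_card_ge le_sup_left
    rw [hn, hQ]
    exact Nat.pow_le_pow_right (by norm_num) hn2
  have : sc c ∈ Q := by
    rw [heq]
    exact (le_sup_right : Z ≤ Q ⊔ Z) (Subgroup.mem_zpowers _)
  obtain ⟨p, _, hp⟩ := this
  rw [← hp]; exact p.2

lemma sc_mem (H : Subgroup G) (hH : Nat.card H = 144) (c : (ZMod 7)ˣ) : sc c ∈ H := by
  have h : c ^ 3 = 1 ∨ (-c) ^ 3 = 1 := by
    revert c; decide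
  rcases h with h | h
  · exact cube_mem H hH c h
  · have h1 := cube_mem H hH _ h
    have h2 : sc c = -1 * sc (-c) := by
      apply Units.ext
      ext i j
      simp [sc]
    rw [h2]
    exact H.mul_mem (neg_one_mem H hH) h1

theorem transitive_aux
    (H : Subgroup (GL (Fin 2) (ZMod 7))) (hH : Nat.card H = 144)
    (v w : Fin 2 → ZMod 7) (hv : v ≠ 0) (hw : w ≠ 0) :
    ∃ g ∈ H, (g : Matrix (Fin 2) (Fin 2) (ZMod 7)).mulVec v = w := by
  let _ := act H
  let S := MulAction.stabilizer H v
  let O := MulAction.orbit H v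
  have hSmem : ∀ s : S, s.1.1.1 *ᵥ v = v := fun s => s.2
  have hOS : Nat.card O * Nat.card S = 144 := by
    rw [← hH, ← Nat.card_prod]
    exact Nat.card_congr (MulAction.orbitProdStabilizerEquivGroup H v)
  let f : S →* (ZMod 7)ˣ :=
    (Matrix.GeneralLinearGroup.det).comp (H.subtype.comp S.subtype)
  have hf : Function.Injective f := by
    rw [injective_iff_map_eq_one]
    intro s hs
    have h7 := unip s.1.1 v hv (hSmem s) (congrArg Units.val hs)
    have h144 : s.1.1 ^ 144 = 1 := by
      have : s.1 ^ 144 = 1 := by rw [← hH]; exact pow_card_eq_one'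
      simpa using congrArg Subtype.val this
    have h1 : s.1.1 = 1 := by
      rw [← orderOf_eq_one_iff]
      have := Nat.dvd_gcd (orderOf_dvd_of_pow_eq_one h7) (orderOf_dvd_of_pow_eq_one h144)
      norm_num at this
      simpa using this
    apply Subtype.ext; apply Subtype.ext; exact h1
  have hS6 : Nat.card S ∣ 6 := by
    have := Subgroup.card_dvd_of_injective f hf
    rw [Nat.card_eq_fintype_card (α := (ZMod 7)ˣ), ZMod.card_units] at this
    simpa using this
  have hsub : O ⊆ ({0}ᶜ : Set V) := by
    rintro x ⟨g, rfl⟩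
    exact inj0 g.1 v hv
  have hcard : ({0}ᶜ : Set V).ncard = 48 := by
    rw [Set.ncard_compl, Nat.card_eq_fintype_card]
    simp
  have hO48 : O.ncard ≤ 48 := hcard ▸ Set.ncard_le_ncard hsub
  change O.ncard * _ = _ at hOS
  have hScases : Nat.card S = 3 ∨ Nat.card S = 6 := by
    have : Nat.card S ≤ 6 := Nat.le_of_dvd (by norm_num) hS6
    interval_cases Nat.card S <;> omega
  rcases hScases with h3 | h6
  · have : O = {0}ᶜ := Set.eq_of_subset_of_ncard_le hsub (by rw [hcard]; rw [h3] at hOS; omega)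
    have hwO : w ∈ O := by rw [this]; exact hw
    obtain ⟨g, hg⟩ := hwO
    exact ⟨g.1, g.2, hg⟩
  · exfalso
    have hO : O.ncard = 24 := by
      rw [h6] at hOS
      omega
    obtain ⟨z, hz⟩ := exists_prime_orderOf_dvd_card' (G := S) 2 (by rw [h6]; norm_num)
    set r : G := z.1.1 with hr
    have hr2 : r * r = 1 := by
      have : z ^ 2 = 1 := orderOf_dvd_iff_pow_eq_one.mp (dvd_of_eq hz)
      have h3 := congrArg (fun y : S => y.1.1) this
      simpa [pow_two] using h3
    have hr1 : r ≠ 1 := by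
      intro h
      have : z = 1 := by
        apply Subtype.ext; apply Subtype.ext; exact h
      rw [this, orderOf_one] at hz
      omega
    have h1 : r.1 *ᵥ v = v := hSmem z
    obtain ⟨y, hy, h2⟩ := neg_eig r hr2 hr1
    have hcomm : ∀ s : S, s.1.1 * r = r * s.1.1 := by
      intro s
      have : s * z = z * s := hf (by rw [map_mul, map_mul, mul_comm])
      exact congrArg (fun y : S => y.1.1) this
    choose a b ha hb using fun s : S => diag r v y hv hy h1 h2 s.1.1 (hcomm s)
    have hbi : Function.Injective b := by
      intro s t hst
      apply Subtype.ext; apply Subtype.ext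
      apply ext_basis r v y hv hy h1 h2
      · rw [hSmem, hSmem]
      · rw [hb, hb, hst]
    have hbs : Function.Surjective b := by
      refine (Function.Injective.bijective_of_nat_card_le hbi ?_).2
      rw [h6, Nat.card_eq_fintype_card, ZMod.card_units]
    have hT : ∀ c d : (ZMod 7)ˣ, ∃ g ∈ H, g.1 *ᵥ v = (c : ZMod 7) • v ∧
        g.1 *ᵥ y = (d : ZMod 7) • y := by
      intro c d
      obtain ⟨s, hs⟩ := hbs (c⁻¹ * d)
      refine ⟨sc c * s.1.1, H.mul_mem (sc_mem H hH c) s.1.2, ?_, ?_⟩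
      · rw [Units.val_mul, ← Matrix.mulVec_mulVec, hSmem, sc_mulVec]
      · rw [Units.val_mul, ← Matrix.mulVec_mulVec, hb, hs, sc_mulVec, smul_smul,
          ← Units.val_mul, mul_inv_cancel_left]
    have hOH : ∀ g ∈ H, ∀ x ∈ O, g.1 *ᵥ x ∈ O := by
      rintro g hg x ⟨k, rfl⟩
      refine ⟨⟨g, hg⟩ * k, ?_⟩
      exact mul_smul (⟨g, hg⟩ : H) k v
    by_cases hex : ∃ c d : (ZMod 7)ˣ, (c : ZMod 7) • v + (d : ZMod 7) • y ∈ O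
    · obtain ⟨c, d, hcd⟩ := hex
      let F : (ZMod 7)ˣ × (ZMod 7)ˣ → O := fun p =>
        ⟨((p.1 : (ZMod 7)ˣ) : ZMod 7) • v + ((p.2 : (ZMod 7)ˣ) : ZMod 7) • y, by
          obtain ⟨g, hg, e1, e2⟩ := hT (p.1 * c⁻¹) (p.2 * d⁻¹)
          have := hOH g hg _ hcd
          rw [Matrix.mulVec_add, Matrix.mulVec_smul, Matrix.mulVec_smul, e1, e2, smul_smul,
            smul_smul, ← Units.val_mul, ← Units.val_mul, mul_comm c, mul_comm d,
            inv_mul_cancel_right, inv_mul_cancel_right] at this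
          exact this⟩
      have hF : Function.Injective F := by
        rintro ⟨p1, p2⟩ ⟨q1, q2⟩ h
        have h := congrArg Subtype.val h
        simp only [F] at h
        have h' := congrArg (fun x => r.1 *ᵥ x) h
        simp only [Matrix.mulVec_add, Matrix.mulVec_smul, h1, h2] at h'
        have t2 : (2 : ZMod 7) ≠ 0 := by decide
        have k1 : (2 * (p1 : ZMod 7)) • v = (2 * (q1 : ZMod 7)) • v := by
          linear_combination (norm := module) (1 : ZMod 7) • h + (1 : ZMod 7) • h'
        have k2 : (2 * (p2 : ZMod 7)) • y = (2 * (q2 : ZMod 7)) • y := by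
          linear_combination (norm := module) (1 : ZMod 7) • h - (1 : ZMod 7) • h'
        have k1 := mul_left_cancel₀ t2 (smul_left_injective _ hv k1)
        have k2 := mul_left_cancel₀ t2 (smul_left_injective _ hy k2)
        rw [Units.ext k1, Units.ext k2]
      have := Nat.card_le_card_of_injective F hF
      rw [Nat.card_prod, Nat.card_eq_fintype_card, ZMod.card_units] at this
      change _ ≤ O.ncard at this
      omega
    · have hss : O ⊆ Set.range (fun c : ZMod 7 => c • v) ∪ Set.range (fun c : ZMod 7 => c • y) := by
        intro x hx
        obtain ⟨c, d, rfl⟩ := span2 r v y hv hy h1 h2 x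
        by_cases hc : c = 0
        · right; exact ⟨d, by simp [hc]⟩
        by_cases hd : d = 0
        · left; exact ⟨c, by simp [hd]⟩
        exact absurd ⟨Units.mk0 c hc, Units.mk0 d hd, hx⟩ hex
      have hr7 : ∀ u : V, (Set.range (fun c : ZMod 7 => c • u)).ncard ≤ 7 := by
        intro u
        have := Set.ncard_image_le (f := fun c : ZMod 7 => c • u) (s := Set.univ) Set.finite_univ
        rw [Set.image_univ, Set.ncard_univ] at this
        simpa using this
      have k1 := Set.ncard_le_ncard hss
      have k2 := Set.ncard_union_le (Set.range (fun c : ZMod 7 => c • v)) (Set.range (fun c : ZMod 7 => c • y))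
      have := hr7 v
      have := hr7 y
      omega

end

end GL27

/-- Every subgroup of `GL₂(F₇)` of order `144 = 2⁴·3²` acts transitively on the
48 nonzero vectors of the natural module `F₇²`. -/
theorem subgroup_GL2_F7_order_144_transitive_on_nonzero_vectors
    (H : Subgroup (GL (Fin 2) (ZMod 7))) (hH : Nat.card H = 144)
    (v w : Fin 2 → ZMod 7) (hv : v ≠ 0) (hw : w ≠ 0) :
    ∃ g ∈ H, (g : Matrix (Fin 2) (Fin 2) (ZMod 7)).mulVec v = w := by
  exact GL27.transitive_aux H hH v w hv hw
end

section
/- Any two subgroups of GL₂(F₇) of order 144 = 2⁴·3² are conjugate in GL₂(F₇). -/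
open Matrix

namespace GL27

abbrev Z := ZMod 7

abbrev Q := Z × Z × Z × Z

/-- Product of 2×2 matrices coded as quadruples. -/
def mm (x y : Q) : Q :=
  (x.1 * y.1 + x.2.1 * y.2.2.1, x.1 * y.2.1 + x.2.1 * y.2.2.2,
   x.2.2.1 * y.1 + x.2.2.2 * y.2.2.1, x.2.2.1 * y.2.1 + x.2.2.2 * y.2.2.2)

/-- Repeated eigenvalue, but not diagonal: such an element has order divisible by 7. -/
def bad (x : Q) : Bool :=
  decide ((x.1 - x.2.2.2) * (x.1 - x.2.2.2) + 4 * (x.2.1 * x.2.2.1) = 0) &&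
    (decide (x.2.1 ≠ 0) || decide (x.2.2.1 ≠ 0))

def U : List Q := [(1,0,0,1), (2,0,0,1), (4,0,0,1)]

def T : List Q := [(1,0,0,1), (2,0,0,1), (4,0,0,1), (1,0,0,2), (2,0,0,2), (4,0,0,2),
  (1,0,0,4), (2,0,0,4), (4,0,0,4)]

def C0 : List Q := [(2,0,0,1), (1,0,0,2), (6,1,1,4), (6,2,4,4), (6,4,2,4), (4,3,5,6),
  (4,5,3,6), (4,6,6,6)]

def y0 : Q := (6,1,1,4)
def y1 : Q := (6,6,6,4)

def step1 (y : Q) : Bool :=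
  (U.any fun t => bad (mm y t)) ||
  (T.any fun t => T.any fun s => decide (mm (mm t y) s = y0) || decide (mm (mm t y) s = y1)
    || decide (mm (mm t (mm y y)) s = y0) || decide (mm (mm t (mm y y)) s = y1)) ||
  (U.any fun t => U.any fun s => U.any fun r => bad (mm (mm (mm (mm (mm y t) y) s) y) r))

theorem step1_all : ∀ a b c : Z, a * (3 - a) - b * c = 2 → (b = 0 ∧ c = 0) ∨
    step1 (a, b, c, 3 - a) = true := by
  decide +kernel

def step2 (y : Q) : Bool :=
  decide (y ∈ C0) ||
  (U.any fun t => bad (mm y t)) || (U.any fun t => bad (mm (mm y t) y0))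

theorem step2_all : ∀ a b c : Z, a * (3 - a) - b * c = 2 → 
    step2 (a, b, c, 3 - a) = true := by
  decide +kernel

def dt (x : Q) : Z := x.1 * x.2.2.2 - x.2.1 * x.2.2.1

def pred0 (x : Q) : Bool :=
  decide (dt x ≠ 0) && (C0.any fun z => decide (mm x (2,0,0,1) = mm z x)) &&
    (C0.any fun z => decide (mm x y0 = mm z x))

def predM (x : Q) : Bool :=
  decide (dt x ≠ 0) && (decide (mm x (2,0,0,1) = mm (2,0,0,1) x) ||
    decide (mm x (2,0,0,1) = mm (1,0,0,2) x))

theorem card0 : (Finset.univ.filter fun x : Q => pred0 x = true).card = 144 := by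
  decide +kernel

theorem cardM : (Finset.univ.filter fun x : Q => predM x = true).card = 72 := by
  decide +kernel


def toT (g : G) : Q := (g 0 0, g 0 1, g 1 0, g 1 1)

theorem toT_mul (g h : G) : toT (g * h) = mm (toT g) (toT h) := by
  simp [toT, mm, Matrix.mul_apply, Fin.sum_univ_two]

theorem toT_inj : Function.Injective toT := by
  intro g h e
  simp only [toT, Prod.mk.injEq] at e
  ext i j
  fin_cases i <;> fin_cases j
  · exact e.1
  · exact e.2.1
  · exact e.2.2.1
  · exact e.2.2.2

theorem dt_eq (g : G) : dt (toT g) = (g : Matrix (Fin 2) (Fin 2) (ZMod 7)).det := by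
  simp [dt, toT, Matrix.det_fin_two]

local instance : Fact (Nat.Prime 7) := ⟨by norm_num⟩
local instance : Fact (Nat.Prime 3) := ⟨by norm_num⟩

theorem dt_ne (g : G) : dt (toT g) ≠ 0 := by
  rw [dt_eq]
  exact (Matrix.isUnits_det_units g).ne_zero

/-- Realize a quadruple of nonzero determinant. -/
noncomputable def ofT (x : Q) (h : dt x ≠ 0) : G :=
  Matrix.GeneralLinearGroup.mkOfDetNeZero !![x.1, x.2.1; x.2.2.1, x.2.2.2]
    (by simpa [Matrix.det_fin_two, dt] using h)

theorem toT_ofT (x : Q) (h : dt x ≠ 0) : toT (ofT x h) = x := by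
  simp [toT, ofT, Matrix.GeneralLinearGroup.mkOfDetNeZero]

theorem toT_one : toT 1 = (1, 0, 0, 1) := by
  simp [toT]

/-- The set of codes of the elements of `H`. -/
def S (H : Subgroup G) (x : Q) : Prop := ∃ h ∈ H, toT h = x

theorem S.mul {H : Subgroup G} {x y : Q} (hx : S H x) (hy : S H y) : S H (mm x y) := by
  obtain ⟨a, ha, rfl⟩ := hx
  obtain ⟨b, hb, rfl⟩ := hy
  exact ⟨a * b, H.mul_mem ha hb, toT_mul a b⟩

theorem S_not_bad {H : Subgroup G} (hH : Nat.card H = 144) {x : Q} (hx : S H x) :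
    bad x = false := by
  obtain ⟨g, hg, rfl⟩ := hx
  by_contra hb
  have hb : bad (toT g) = true := by simpa using hb
  simp only [bad, toT, Bool.and_eq_true, Bool.or_eq_true] at hb
  obtain ⟨h1, h2⟩ := hb
  replace h1 := of_decide_eq_true h1
  set X : Matrix (Fin 2) (Fin 2) (ZMod 7) := (g : Matrix (Fin 2) (Fin 2) (ZMod 7)) with hX
  set s : ZMod 7 := 4 * (X 0 0 + X 1 1) with hs
  have key : ∀ a b c d : ZMod 7, (a - d) * (a - d) + 4 * (b * c) = 0 →
      (a - 4 * (a + d)) * (a - 4 * (a + d)) + b * c = 0 ∧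
      (a - 4 * (a + d)) * b + b * (d - 4 * (a + d)) = 0 ∧
      c * (a - 4 * (a + d)) + (d - 4 * (a + d)) * c = 0 ∧
      c * b + (d - 4 * (a + d)) * (d - 4 * (a + d)) = 0 := by
    decide +kernel
  obtain ⟨k1, k2, k3, k4⟩ := key _ _ _ _ h1
  have hN : (X - Matrix.scalar (Fin 2) s) ^ 2 = 0 := by
    rw [pow_two]
    ext i j
    fin_cases i <;> fin_cases j <;>
      simp [Matrix.mul_apply, Fin.sum_univ_two, hs]
    · exact k1
    · exact k2
    · exact k3
    · exact k4
  have h7 : X ^ 7 = Matrix.scalar (Fin 2) s := by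
    have hc : Commute (X - Matrix.scalar (Fin 2) s) (Matrix.scalar (Fin 2) s) :=
      (Matrix.scalar_commute s (fun r => mul_comm _ _) _).symm
    have := add_pow_char_of_commute 7 hc
    rw [sub_add_cancel] at this
    rw [this, ← map_pow, ZMod.pow_card,
      show (X - Matrix.scalar (Fin 2) s) ^ 7 = (X - Matrix.scalar (Fin 2) s) ^ 2 *
        (X - Matrix.scalar (Fin 2) s) ^ 5 by rw [← pow_add], hN]
    simp
  have hs0 : s ≠ 0 := by
    intro h0
    rw [h0, map_zero] at h7
    have : X.det ^ 7 = 0 := by rw [← Matrix.det_pow, h7]; simp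
    exact (Matrix.isUnits_det_units g).ne_zero (pow_eq_zero_iff (by norm_num) |>.1 this)
  have h42 : g ^ 42 = 1 := by
    apply Units.ext
    rw [Units.val_pow_eq_pow_val, ← hX, show 42 = 7 * 6 by norm_num, pow_mul, h7, ← map_pow]
    have : s ^ 6 = 1 := ZMod.pow_card_sub_one_eq_one hs0
    rw [this]; simp
  have h144 : g ^ 144 = 1 := by
    have := pow_card_eq_one' (x := (⟨g, hg⟩ : H))
    rw [hH] at this
    simpa using congrArg Subtype.val this
  have h6 : g ^ 6 = 1 := by
    have := pow_gcd_eq_one.2 ⟨h42, h144⟩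
    simpa using this
  have hX7 : X = Matrix.scalar (Fin 2) s := by
    rw [← h7, hX, ← Units.val_pow_eq_pow_val, pow_succ, h6, one_mul]
  have e1 : X 0 1 = 0 := by rw [hX7]; simp
  have e2 : X 1 0 = 0 := by rw [hX7]; simp
  rcases h2 with h | h
  · exact of_decide_eq_true h e1
  · exact of_decide_eq_true h e2

def HasT (H : Subgroup G) : Prop := ∀ t ∈ T, S H t

theorem HasT.U {H : Subgroup G} (h : HasT H) : ∀ t ∈ U, S H t := by
  have : ∀ t ∈ GL27.U, t ∈ T := by
    have h : (GL27.U.all fun t => decide (t ∈ T)) = true := by decide +kernel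
    exact fun t ht => of_decide_eq_true (List.all_eq_true.1 h t ht)
  exact fun t ht => h t (this t ht)

/-- conjugates of a trace 3, determinant 2 element. -/
theorem conj_form (x d : G) (h1 : (toT d).1 + (toT d).2.2.2 = 3) (h2 : dt (toT d) = 2) :
    ∃ a b c : Z, a * (3 - a) - b * c = 2 ∧ toT (x * d * x⁻¹) = (a, b, c, 3 - a) := by
  have htr : (toT (x * d * x⁻¹)).1 + (toT (x * d * x⁻¹)).2.2.2 = 3 := by
    rw [← h1]
    have := Matrix.trace_units_conj x (d : Matrix (Fin 2) (Fin 2) (ZMod 7))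
    simpa [Matrix.trace_fin_two, toT] using this
  have hdt : dt (toT (x * d * x⁻¹)) = 2 := by
    rw [← h2, dt_eq, dt_eq]
    have := Matrix.det_units_conj x (d : Matrix (Fin 2) (Fin 2) (ZMod 7))
    simpa using this
  generalize toT (x * d * x⁻¹) = y at *
  obtain ⟨a, b, c, e⟩ := y
  have he : e = 3 - a := by rw [← htr]; simp
  subst he
  exact ⟨a, b, c, hdt, rfl⟩

theorem card_le {H : Subgroup G} (p : Q → Bool) (h : ∀ x ∈ H, p (toT x) = true) :
    Nat.card H ≤ (Finset.univ.filter fun x : Q => p x = true).card := by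
  have := Nat.card_le_card_of_injective
    (fun x : H => (⟨toT x, by simpa using h x x.2⟩ :
      (Finset.univ.filter fun x : Q => p x = true)))
    (fun x y e => Subtype.ext (toT_inj (congrArg Subtype.val e)))
  simpa only [Nat.card_eq_fintype_card, Fintype.card_coe] using this

theorem mem_of_card {H : Subgroup G} (p : Q → Bool) (h : ∀ x ∈ H, p (toT x) = true)
    (hc : (Finset.univ.filter fun x : Q => p x = true).card = Nat.card H) (x : G)
    (hx : p (toT x) = true) : x ∈ H := by
  have hinj : Function.Injective (fun x : H => (⟨toT x, by simpa using h x x.2⟩ :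
      (Finset.univ.filter fun x : Q => p x = true))) :=
    (fun x y e => Subtype.ext (toT_inj (congrArg Subtype.val e)))
  have hb := (Nat.bijective_iff_injective_and_card _).2 ⟨hinj, by
    rw [← hc]; simp only [Nat.card_eq_fintype_card, Fintype.card_coe]⟩
  obtain ⟨y, hy⟩ := hb.2 ⟨toT x, by simpa using hx⟩
  have : (y : G) = x := toT_inj (congrArg Subtype.val hy)
  exact this ▸ y.2

theorem diag_cases : ∀ a : Z, a * (3 - a) - 0 * 0 = 2 → a = 2 ∨ a = 1 := by
  decide +kernel

theorem conj_eq {x d : G} {y : Q} (h : toT (x * d * x⁻¹) = y) :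
    mm (toT x) (toT d) = mm y (toT x) := by
  rw [← h, ← toT_mul, ← toT_mul]
  simp

theorem lemA {H : Subgroup G} (hH : Nat.card H = 144) (hT : HasT H) : S H y0 ∨ S H y1 := by
  by_contra hcon
  obtain ⟨d, hd, hdt⟩ := hT (2,0,0,1) (by decide +kernel)
  have : ∀ x ∈ H, predM (toT x) = true := by
    intro x hx
    obtain ⟨a, b, c, habc, he⟩ := conj_form x d (by rw [hdt]; decide +kernel)
      (by rw [hdt]; decide +kernel)
    have hy : S H (a, b, c, 3 - a) :=
      ⟨x * d * x⁻¹, H.mul_mem (H.mul_mem hx hd) (H.inv_mem hx), he⟩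
    have hce := conj_eq he
    rw [hdt] at hce
    rcases step1_all a b c habc with ⟨rfl, rfl⟩ | hs
    · simp only [predM, Bool.and_eq_true, Bool.or_eq_true]
      refine ⟨decide_eq_true (dt_ne x), ?_⟩
      rcases diag_cases a habc with rfl | rfl
      · exact Or.inl (decide_eq_true (by
          rw [hce, show (3 - 2 : Z) = 1 by decide +kernel]))
      · exact Or.inr (decide_eq_true (by
          rw [hce, show (3 - 1 : Z) = 2 by decide +kernel]))
    · exfalso
      generalize (a, b, c, 3 - a) = y at *
      simp only [step1, Bool.or_eq_true, List.any_eq_true] at hs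
      rcases hs with (⟨t, ht, h⟩ | ⟨t, ht, s, hs, h⟩) | ⟨t, ht, s, hs, r, hr, h⟩
      · exact absurd h (by simp [S_not_bad hH (hy.mul (hT.U t ht))])
      · have h1 := ((hT t ht).mul hy).mul (hT s hs)
        have h2 := ((hT t ht).mul (hy.mul hy)).mul (hT s hs)
        rcases h with ((h | h) | h) | h <;> replace h := of_decide_eq_true h
        · exact hcon (Or.inl (h ▸ h1))
        · exact hcon (Or.inr (h ▸ h1))
        · exact hcon (Or.inl (h ▸ h2))
        · exact hcon (Or.inr (h ▸ h2))
      · exact absurd h (by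
          simp [S_not_bad hH (((((hy.mul (hT.U t ht)).mul hy).mul (hT.U s hs)).mul hy).mul
            (hT.U r hr))])
  have := card_le predM this
  rw [cardM, hH] at this
  omega

theorem lemB {H : Subgroup G} (hH : Nat.card H = 144) (hT : HasT H) (h0 : S H y0) (x : G) :
    x ∈ H ↔ pred0 (toT x) = true := by
  have key : ∀ x ∈ H, ∀ d ∈ H, (toT d).1 + (toT d).2.2.2 = 3 → dt (toT d) = 2 →
      (C0.any fun z => decide (mm (toT x) (toT d) = mm z (toT x))) = true := by
    intro x hx d hd h1 h2
    obtain ⟨a, b, c, habc, he⟩ := conj_form x d h1 h2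
    have hy : S H (a, b, c, 3 - a) :=
      ⟨x * d * x⁻¹, H.mul_mem (H.mul_mem hx hd) (H.inv_mem hx), he⟩
    have hce := conj_eq he
    have hs := step2_all a b c habc
    generalize (a, b, c, 3 - a) = y at *
    simp only [step2, Bool.or_eq_true, List.any_eq_true] at hs
    rcases hs with (h | ⟨t, ht, h⟩) | ⟨t, ht, h⟩
    · exact List.any_eq_true.2 ⟨y, of_decide_eq_true h, decide_eq_true hce⟩
    · exact absurd h (by simp [S_not_bad hH (hy.mul (hT.U t ht))])
    · exact absurd h (by simp [S_not_bad hH ((hy.mul (hT.U t ht)).mul h0)])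
  have all : ∀ x ∈ H, pred0 (toT x) = true := by
    intro x hx
    obtain ⟨d, hd, hdt⟩ := hT (2,0,0,1) (by decide +kernel)
    obtain ⟨e, he, het⟩ := h0
    simp only [pred0, Bool.and_eq_true]
    refine ⟨⟨decide_eq_true (dt_ne x), ?_⟩, ?_⟩
    · have := key x hx d hd (by rw [hdt]; decide +kernel) (by rw [hdt]; decide +kernel)
      rwa [hdt] at this
    · have := key x hx e he (by rw [het]; decide +kernel) (by rw [het]; decide +kernel)
      rwa [het] at this
  exact ⟨all x, mem_of_card pred0 all (card0.trans hH.symm) x⟩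

theorem T_mul : ∀ x ∈ T, ∀ y ∈ T, mm x y ∈ T := by
  have h : (T.all fun x => T.all fun y => decide (mm x y ∈ T)) = true := by decide +kernel
  exact fun x hx y hy => of_decide_eq_true
    (List.all_eq_true.1 (List.all_eq_true.1 h x hx) y hy)

theorem T_cube : ∀ x ∈ T, mm (mm x x) x = (1, 0, 0, 1) := by
  have h : (T.all fun x => decide (mm (mm x x) x = (1, 0, 0, 1))) = true := by decide +kernel
  exact fun x hx => of_decide_eq_true (List.all_eq_true.1 h x hx)

theorem T_dt : ∀ x ∈ T, dt x ≠ 0 := by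
  have h : (T.all fun x => decide (dt x ≠ 0)) = true := by decide +kernel
  exact fun x hx => of_decide_eq_true (List.all_eq_true.1 h x hx)

theorem cube_one {g : G} (hg : toT g ∈ T) : g * g * g = 1 := by
  apply toT_inj
  rw [toT_mul, toT_mul, toT_one, T_cube _ hg]

def Tsub : Subgroup G where
  carrier := {g | toT g ∈ T}
  mul_mem' {a b} ha hb := by
    have := T_mul _ ha _ hb
    rwa [← toT_mul] at this
  one_mem' := by
    show toT 1 ∈ T
    rw [toT_one]; decide +kernel
  inv_mem' {a} ha := by
    have : a⁻¹ = a * a := (eq_inv_of_mul_eq_one_left (cube_one ha)).symm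
    show toT a⁻¹ ∈ T
    rw [this, toT_mul]
    exact T_mul _ ha _ ha

theorem Tsub_p : IsPGroup 3 Tsub := by
  intro g
  refine ⟨1, Subtype.ext ?_⟩
  have := cube_one g.2
  simpa [pow_succ] using this

theorem card_G : Nat.card G = 2016 := by
  rw [Matrix.card_GL_field]
  simp [Fin.prod_univ_two]

abbrev cj (g : G) (H : Subgroup G) : Subgroup G := Subgroup.map (MulAut.conj g).toMonoidHom H

theorem card_cj (g : G) (H : Subgroup G) : Nat.card (cj g H) = Nat.card H :=
  Subgroup.card_map_of_injective (MulAut.conj g).injective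

theorem cj_cj (g h : G) (H : Subgroup G) : cj g (cj h H) = cj (g * h) H := by
  simp only [cj, Subgroup.map_map, map_mul]
  rfl

theorem mem_cj {g x : G} {H : Subgroup G} : x ∈ cj g H ↔ g⁻¹ * x * g ∈ H := by
  constructor
  · rintro ⟨y, hy, rfl⟩
    simpa [mul_assoc] using hy
  · intro h
    exact ⟨_, h, by simp [mul_assoc]⟩

theorem lemT {H : Subgroup G} (hH : Nat.card H = 144) : ∃ g, HasT (cj g H) := by
  have hi : Nat.card (G ⧸ H) = 14 := by
    have := H.index_mul_card
    rw [hH, card_G] at this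
    have : H.index = 14 := by omega
    exact this
  obtain ⟨q, hq⟩ := Tsub_p.nonempty_fixed_point_of_prime_not_dvd_card (G ⧸ H)
    (by rw [hi]; norm_num)
  obtain ⟨g, rfl⟩ := QuotientGroup.mk_surjective q
  refine ⟨g, fun t ht => ⟨ofT t (T_dt t ht), ?_, toT_ofT _ _⟩⟩
  rw [mem_cj]
  have h := hq ⟨ofT t (T_dt t ht), by show toT _ ∈ T; rw [toT_ofT]; exact ht⟩
  have h2 : (QuotientGroup.mk (ofT t (T_dt t ht) * g) : G ⧸ H) = QuotientGroup.mk g := h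
  have := QuotientGroup.eq.1 h2.symm
  simpa [mul_assoc] using this

theorem nT : ∀ t ∈ T, mm (mm (6,0,0,1) t) (6,0,0,1) = t := by
  have h : (T.all fun t => decide (mm (mm (6,0,0,1) t) (6,0,0,1) = t)) = true := by decide +kernel
  exact fun t ht => of_decide_eq_true (List.all_eq_true.1 h t ht)

theorem lemC {H : Subgroup G} (hH : Nat.card H = 144) :
    ∃ g, ∀ x, x ∈ cj g H ↔ pred0 (toT x) = true := by
  obtain ⟨g, hT⟩ := lemT hH
  have hc : Nat.card (cj g H) = 144 := (card_cj g H).trans hH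
  rcases lemA hc hT with h | h
  · exact ⟨g, lemB hc hT h⟩
  · have hn : dt (6,0,0,1) ≠ 0 := by decide +kernel
    set n := ofT (6,0,0,1) hn with hnd
    have hnn : n * n = 1 := by
      apply toT_inj
      rw [toT_mul, toT_one, hnd, toT_ofT]
      decide +kernel
    have hni : n⁻¹ = n := inv_eq_of_mul_eq_one_left hnn
    have tr : ∀ x, S (cj g H) x → S (cj (n * g) H) (mm (mm (6,0,0,1) x) (6,0,0,1)) := by
      rintro _ ⟨y, hy, rfl⟩
      refine ⟨n * y * n, ?_, by rw [toT_mul, toT_mul, hnd, toT_ofT]⟩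
      rw [← cj_cj, mem_cj, hni]
      have : n * (n * y * n) * n = y := by
        calc n * (n * y * n) * n = (n * n) * y * (n * n) := by group
          _ = y := by rw [hnn]; simp
      rwa [this]
    refine ⟨n * g, lemB ((card_cj _ H).trans hH) (fun t ht => ?_) ?_⟩
    · have := tr t (hT t ht)
      rwa [nT t ht] at this
    · have := tr y1 h
      rwa [show mm (mm (6,0,0,1) y1) (6,0,0,1) = y0 by decide +kernel] at this

end GL27

/-- Any two subgroups of `GL₂(F₇)` of order `144 = 2⁴·3²` are conjugate in `GL₂(F₇)`. -/
theorem subgroups_GL2_F7_order_144_conjugate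
    (H K : Subgroup (GL (Fin 2) (ZMod 7)))
    (hH : Nat.card H = 144) (hK : Nat.card K = 144) :
    ∃ g : GL (Fin 2) (ZMod 7),
      Subgroup.map (MulAut.conj g).toMonoidHom H = K := by
  obtain ⟨g, hg⟩ := GL27.lemC hH
  obtain ⟨k, hk⟩ := GL27.lemC hK
  refine ⟨k⁻¹ * g, ?_⟩
  have e : GL27.cj g H = GL27.cj k K := by
    ext x
    rw [hg, hk]
  show GL27.cj (k⁻¹ * g) H = K
  rw [← GL27.cj_cj, e, GL27.cj_cj]
  ext x
  rw [GL27.mem_cj]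
  simp
end
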